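/- Let M > 0 and ν ∈ (0, 1/2]. Let G₁, G₂ : (0,M) → ℝ be smooth positive functions with G₁(a) ≤ G₂(a) for all a ∈ (0,M), and suppose both satisfy lim_{a→0⁺} Gᵢ(a)/(4πa) = 1 and lim_{a→M⁻} Gᵢ(a)/(4π(M−a)) = 1. Then κ₁(G₂) ≤ κ₁(G₁). If moreover G₁ < G₂ on a set of positive Lebesgue measure, then κ₁(G₂) < κ₁(G₁). -/

import Mathlib

open MeasureTheory Real Set Filter

/-- The Rayleigh quotient of a function `f` for the one-dimensional magnetic
Sturm–Liouville problem on `(0, M)` with weight `G` and flux `ν`. -/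
noncomputable def rayleigh (M ν : ℝ) (G f : ℝ → ℝ) : ℝ :=
  (∫ a in Ioo (0:ℝ) M, (G a * (deriv f a) ^ 2 + 4 * π ^ 2 * ν ^ 2 * (f a) ^ 2 / G a)) /
    ∫ a in Ioo (0:ℝ) M, (f a) ^ 2

/-- The admissible class `𝓕(G)`: measurable functions on `(0, M)`, not a.e. zero,
differentiable, with `f ∈ L²`, `√G · f' ∈ L²` and `f/√G ∈ L²`. -/
def Admissible (M : ℝ) (G f : ℝ → ℝ) : Prop :=
  Measurable f ∧
  ¬ (∀ᵐ a ∂(volume.restrict (Ioo (0:ℝ) M)), f a = 0) ∧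
  (∀ a ∈ Ioo (0:ℝ) M, DifferentiableAt ℝ f a) ∧
  IntegrableOn (fun a => (f a) ^ 2) (Ioo 0 M) ∧
  IntegrableOn (fun a => G a * (deriv f a) ^ 2) (Ioo 0 M) ∧
  IntegrableOn (fun a => (f a) ^ 2 / G a) (Ioo 0 M)

/-- `κ₁(G)`: the infimum of the Rayleigh quotient over the admissible class. -/
noncomputable def kappa1 (M ν : ℝ) (G : ℝ → ℝ) : ℝ :=
  sInf { q | ∃ f : ℝ → ℝ, Admissible M G f ∧ q = rayleigh M ν G f }

/-!
Let `c = 2π|ν|`. If `u` is a positive first eigenfunction for the weight `G₁`, with eigenvalue `κ`,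
then `w = G₁ u' / u` solves the Riccati equation `w' = (c² - w²) / G₁ - κ` with `w(0⁺) = c` and
`w(M⁻) = -c`. Such a pair `(κ, w)` is obtained directly: for coefficients `1 / G₁` cut off near the
endpoints, by shooting in `κ`; in general, by compactness.

Given `(κ, w)`, completing the square yields
`G₁ f'² + c² f² / G₁ - κ f² = (w f²)' + (G₁ f' - w f)² / G₁`
for every admissible `f`. As `f² / G₁` is integrable while `1 / G₁` is not integrable at either
endpoint, `w f²` is arbitrarily small along sequences tending to `0` and to `M`, so `κ ≤ κ₁(G₁)`.

Conversely, take `f > 0` with `G₂ f' = w f`. Its energy density for `G₂` is `(w² + c²) f² / G₂`,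
while `(w f²)' + κ f² = (2 w² / G₂ + (c² - w²) / G₁) f²`. The latter exceeds the former by
`(c² - w²) (1 / G₁ - 1 / G₂) f² ≥ 0`, and `w f²` is nonnegative near `0` and nonpositive near `M`,
so integration shows that the Rayleigh quotient of `f` for `G₂` is at most `κ`. Since `|w| < c`
inside `(0, M)`, the inequality is strict once `G₁ < G₂` on a set of positive measure.
-/
open scoped Topology NNReal

section ODE

variable {E : Type*} [NormedAddCommGroup E] [NormedSpace ℝ E] {a b : ℝ}

lemma exists_forall_hasDerivWithinAt_Icc_of_lipschitzWith [CompleteSpace E] {v : ℝ → E → E}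
    {K L : ℝ≥0} (hab : a ≤ b) (hlip : ∀ t ∈ Icc a b, LipschitzWith K (v t))
    (hcont : ∀ x, ContinuousOn (v · x) (Icc a b)) (hL : ∀ t ∈ Icc a b, ∀ x, ‖v t x‖ ≤ L) (x₀ : E) :
    ∃ w : ℝ → E, w a = x₀ ∧ ∀ t ∈ Icc a b, HasDerivWithinAt w (v t (w t)) (Icc a b) t := by
  have hv : IsPicardLindelof v (⟨a, le_rfl, hab⟩ : Icc a b) x₀ (L * (b - a).toNNReal) 0 L K :=
    { lipschitzOnWith := fun t ht => (hlip t ht).lipschitzOnWith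
      continuousOn := fun x _ => hcont x
      norm_le := fun t ht x _ => hL t ht x
      mul_max_le := by simp [max_eq_left (sub_nonneg.2 hab)] }
  exact hv.exists_eq_forall_mem_Icc_hasDerivWithinAt₀

lemma hasDerivWithinAt_Ici_of_Icc {w : ℝ → E} {w' : E} {t : ℝ} (ht : t ∈ Ico a b)
    (h : HasDerivWithinAt w w' (Icc a b) t) : HasDerivWithinAt w w' (Ici t) t :=
  (h.mono (Icc_subset_Icc_left ht.1)).mono_of_mem_nhdsWithin (Icc_mem_nhdsGE ht.2)

lemma continuous_apply_right_of_parametric_ODE {P : Type*} [PseudoMetricSpace P]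
    {v : P → ℝ → E → E} {K : ℝ≥0} {W : P → ℝ → E} {x₀ : E} (hab : a ≤ b)
    (hlip : ∀ κ t, LipschitzWith K (v κ t))
    (hparam : ∀ κ κ' t x, dist (v κ t x) (v κ' t x) ≤ dist κ κ') (hW₀ : ∀ κ, W κ a = x₀)
    (hW : ∀ κ, ∀ t ∈ Icc a b, HasDerivWithinAt (W κ) (v κ t (W κ t)) (Icc a b) t) :
    Continuous fun κ => W κ b := by
  have hcont κ : ContinuousOn (W κ) (Icc a b) := fun t ht => (hW κ t ht).continuousWithinAt
  have hderiv κ : ∀ t ∈ Ico a b, HasDerivWithinAt (W κ) (v κ t (W κ t)) (Ici t) t :=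
    fun t ht => hasDerivWithinAt_Ici_of_Icc ht (hW κ t (Ico_subset_Icc_self ht))
  have hgronwall κ₀ κ : dist (W κ b) (W κ₀ b) ≤ gronwallBound 0 K (0 + dist κ₀ κ) (b - a) :=
    dist_comm (W κ b) (W κ₀ b) ▸ dist_le_of_approx_trajectories_ODE (hlip κ₀)
      (hcont κ₀) (hderiv κ₀) (fun t _ => (dist_self _).le)
      (hcont κ) (hderiv κ) (fun t _ => dist_comm κ₀ κ ▸ hparam κ κ₀ t (W κ t))
      (by simp [hW₀]) b (right_mem_Icc.2 hab)
  refine continuous_iff_continuousAt.2 fun κ₀ => tendsto_iff_dist_tendsto_zero.2 ?_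
  refine squeeze_zero (fun _ => dist_nonneg) (hgronwall κ₀) ?_
  have hlim : Tendsto (fun κ => gronwallBound 0 K (0 + dist κ₀ κ) (b - a)) (𝓝 κ₀)
      (𝓝 (gronwallBound 0 K (0 + dist κ₀ κ₀) (b - a))) :=
    ((gronwallBound_continuous_ε 0 K (b - a)).comp (by fun_prop)).tendsto κ₀
  simpa [gronwallBound_ε0_δ0] using hlim

variable {ι : Type*} {l : Filter ι} {f f' : ι → ℝ → E} {x : ℝ}

lemma tendsto_uncurry_of_hasDerivAt_of_norm_le {y : E} {C : ℝ}
    (hf : ∀ᶠ q in l ×ˢ 𝓝 x, HasDerivAt (f q.1) (f' q.1 q.2) q.2)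
    (hC : ∀ᶠ q in l ×ˢ 𝓝 x, ‖f' q.1 q.2‖ ≤ C) (hfx : Tendsto (fun n => f n x) l (𝓝 y)) :
    Tendsto (fun q : ι × ℝ => f q.1 q.2) (l ×ˢ 𝓝 x) (𝓝 y) := by
  have hball : ∀ᶠ q in l ×ˢ 𝓝 x, ‖f q.1 q.2 - f q.1 x‖ ≤ C * ‖q.2 - x‖ := by
    obtain ⟨p, hp, r, hr, hpr⟩ := eventually_prod_iff.1 (hf.and hC)
    obtain ⟨ε, hε, hball⟩ := Metric.eventually_nhds_iff_ball.1 hr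
    filter_upwards [hp.prod_mk (Metric.ball_mem_nhds x hε)] with q hq
    exact (convex_ball x ε).norm_image_sub_le_of_norm_hasDerivWithin_le
      (fun t ht => (hpr hq.1 (hball t ht)).1.hasDerivWithinAt)
      (fun t ht => (hpr hq.1 (hball t ht)).2) (Metric.mem_ball_self hε) hq.2
  have hzero : Tendsto (fun q : ι × ℝ => C * ‖q.2 - x‖) (l ×ˢ 𝓝 x) (𝓝 0) := by
    have : Tendsto (fun t : ℝ => C * ‖t - x‖) (𝓝 x) (𝓝 (C * ‖x - x‖)) :=
      Continuous.tendsto (by fun_prop) x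
    simpa [Function.comp_def] using this.comp tendsto_snd
  simpa using (squeeze_zero_norm' hball hzero).add (hfx.comp tendsto_fst)

lemma hasDerivAt_of_tendsto_uncurry [l.NeBot] {g : ℝ → E} {y : E}
    (hf : ∀ᶠ q in l ×ˢ 𝓝 x, HasDerivAt (f q.1) (f' q.1 q.2) q.2)
    (hf' : Tendsto (fun q : ι × ℝ => f' q.1 q.2) (l ×ˢ 𝓝 x) (𝓝 y))
    (hfg : ∀ᶠ t in 𝓝 x, Tendsto (fun n => f n t) l (𝓝 (g t))) : HasDerivAt g y x :=
  hasDerivAt_of_tendstoUniformlyOnFilter (g' := fun _ => y)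
    (tendsto_prod_filter_iff.1 hf') hf hfg

end ODE

section Integrals

variable {a b : ℝ}

lemma tendsto_intervalIntegral_Ioo {φ : ℝ → ℝ} (hab : a < b) (hφ : IntegrableOn φ (Ioo a b)) :
    Tendsto (fun q : ℝ × ℝ => ∫ x in q.1..q.2, φ x) (𝓝[>] a ×ˢ 𝓝[<] b)
      (𝓝 (∫ x in Ioo a b, φ x)) := by
  have hcover : AECover (volume.restrict (Ioo a b)) (𝓝[>] a ×ˢ 𝓝[<] b)
      fun q : ℝ × ℝ => Ioc q.1 q.2 :=
    aecover_Ioo_of_Ioc (tendsto_fst.mono_right nhdsWithin_le_nhds)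
      (tendsto_snd.mono_right nhdsWithin_le_nhds)
  refine (hcover.integral_tendsto_of_countably_generated hφ).congr' ?_
  obtain ⟨m, ham, hmb⟩ := exists_between hab
  filter_upwards [prod_mem_prod (Ioo_mem_nhdsGT ham) (Ioo_mem_nhdsLT hmb)] with q hq
  have hsub : Ioc q.1 q.2 ⊆ Ioo a b :=
    fun x hx => ⟨hq.1.1.trans hx.1, hx.2.trans_lt hq.2.2⟩
  rw [Measure.restrict_restrict measurableSet_Ioc, inter_eq_left.2 hsub,
    intervalIntegral.integral_of_le (hq.1.2.trans hq.2.1).le]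

lemma setIntegral_Ioo_nonneg_of_hasDerivAt_le {g g' φ : ℝ → ℝ} (hab : a < b)
    (hg : ∀ x ∈ Ioo a b, HasDerivAt g (g' x) x) (hle : ∀ x ∈ Ioo a b, g' x ≤ φ x)
    (hφ : IntegrableOn φ (Ioo a b)) (ha : ∀ η > 0, ∃ᶠ x in 𝓝[>] a, g x < η)
    (hb : ∀ η > 0, ∃ᶠ x in 𝓝[<] b, -η < g x) : 0 ≤ ∫ x in Ioo a b, φ x := by
  refine le_of_forall_pos_le_add fun η hη => ?_
  suffices -η ≤ ∫ x in Ioo a b, φ x by linarith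
  refine ge_of_tendsto_of_frequently (tendsto_intervalIntegral_Ioo hab hφ) ?_
  have hfreq : ∃ᶠ q in 𝓝[>] a ×ˢ 𝓝[<] b, g q.1 < η / 2 ∧ -(η / 2) < g q.2 :=
    frequently_prod_and.2 ⟨ha _ (half_pos hη), hb _ (half_pos hη)⟩
  obtain ⟨m, ham, hmb⟩ := exists_between hab
  refine (hfreq.and_eventually
    (prod_mem_prod (Ioo_mem_nhdsGT ham) (Ioo_mem_nhdsLT hmb))).mono fun q hq => ?_
  obtain ⟨⟨hg₁, hg₂⟩, hq₁, hq₂⟩ := hq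
  have hsub : Icc q.1 q.2 ⊆ Ioo a b := fun x hx => ⟨hq₁.1.trans_le hx.1, hx.2.trans_lt hq₂.2⟩
  have hftc : g q.2 - g q.1 ≤ ∫ x in q.1..q.2, φ x :=
    intervalIntegral.sub_le_integral_of_hasDeriv_right_of_le (hq₁.2.trans hq₂.1).le
      (fun x hx => (hg x (hsub hx)).continuousAt.continuousWithinAt)
      (fun x hx => (hg x (hsub (Ioo_subset_Icc_self hx))).hasDerivWithinAt)
      (hφ.mono_set hsub) (fun x hx => hle x (hsub (Ioo_subset_Icc_self hx)))
  linarith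

lemma eventually_intervalIntegral_le_of_hasDerivAt_sub {F g u : ℝ → ℝ} (hab : a < b)
    (hF : ContinuousOn F (Ioo a b)) (hu : IntegrableOn u (Ioo a b))
    (hg : ∀ x ∈ Ioo a b, HasDerivAt g (F x - u x) x)
    (ha : ∀ᶠ x in 𝓝[>] a, 0 ≤ g x) (hb : ∀ᶠ x in 𝓝[<] b, g x ≤ 0) :
    ∀ᶠ q in 𝓝[>] a ×ˢ 𝓝[<] b, ∫ x in q.1..q.2, F x ≤ ∫ x in q.1..q.2, u x := by
  obtain ⟨m, ham, hmb⟩ := exists_between hab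
  filter_upwards [ha.prod_mk hb, prod_mem_prod (Ioo_mem_nhdsGT ham) (Ioo_mem_nhdsLT hmb)]
    with q hgq hq
  have hsub : uIcc q.1 q.2 ⊆ Ioo a b :=
    ordConnected_Ioo.uIcc_subset ⟨hq.1.1, by linarith [hq.1.2]⟩ ⟨by linarith [hq.2.1], hq.2.2⟩
  have hFi : IntervalIntegrable F volume q.1 q.2 := (hF.mono hsub).intervalIntegrable
  have hui : IntervalIntegrable u volume q.1 q.2 := (hu.mono_set hsub).intervalIntegrable
  have hftc : ∫ x in q.1..q.2, (F x - u x) = g q.2 - g q.1 :=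
    intervalIntegral.integral_eq_sub_of_hasDerivAt (fun x hx => hg x (hsub hx)) (hFi.sub hui)
  rw [intervalIntegral.integral_sub hFi hui] at hftc
  linarith [hgq.1, hgq.2]

lemma integrableOn_Ioo_of_hasDerivAt_sub {F g u : ℝ → ℝ} (hab : a < b)
    (hF : ContinuousOn F (Ioo a b)) (hF₀ : ∀ x ∈ Ioo a b, 0 ≤ F x)
    (hu : IntegrableOn u (Ioo a b)) (hg : ∀ x ∈ Ioo a b, HasDerivAt g (F x - u x) x)
    (ha : ∀ᶠ x in 𝓝[>] a, 0 ≤ g x) (hb : ∀ᶠ x in 𝓝[<] b, g x ≤ 0) :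
    IntegrableOn F (Ioo a b) := by
  obtain ⟨p, q, -, -, hp, hq, hpq, hpa, hqb⟩ := exists_seq_strictAnti_strictMono_tendsto hab
  have hlim : Tendsto (fun n => (p n, q n)) atTop (𝓝[>] a ×ˢ 𝓝[<] b) :=
    (tendsto_nhdsWithin_iff.2 ⟨hpa, .of_forall fun n => (hp n).1⟩).prodMk
      (tendsto_nhdsWithin_iff.2 ⟨hqb, .of_forall fun n => (hq n).2⟩)
  have hsub n : Icc (p n) (q n) ⊆ Ioo a b := Icc_subset_Ioo (hp n).1 (hq n).2
  rw [← integrableOn_Ioc_iff_integrableOn_Ioo]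
  refine integrableOn_Ioc_of_intervalIntegral_norm_bounded (I := (∫ x in Ioo a b, u x) + 1)
    (fun n => (hF.mono (hsub n)).integrableOn_Icc.mono_set Ioc_subset_Icc_self) hpa hqb ?_
  filter_upwards [hlim.eventually (eventually_intervalIntegral_le_of_hasDerivAt_sub hab hF hu hg
      ha hb), hlim.eventually ((tendsto_intervalIntegral_Ioo hab hu).eventually_le_const
      (lt_add_one _))] with n hFu hu₁
  have hnorm : ∫ x in Ioc (p n) (q n), ‖F x‖ = ∫ x in Ioc (p n) (q n), F x :=
    setIntegral_congr_fun measurableSet_Ioc fun x hx =>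
      Real.norm_of_nonneg (hF₀ x (hsub n (Ioc_subset_Icc_self hx)))
  rw [hnorm, ← intervalIntegral.integral_of_le (hpq n n).le]
  exact hFu.trans hu₁

lemma setIntegral_Ioo_le_of_hasDerivAt_sub {F g u : ℝ → ℝ} (hab : a < b)
    (hF : ContinuousOn F (Ioo a b)) (hFi : IntegrableOn F (Ioo a b))
    (hu : IntegrableOn u (Ioo a b)) (hg : ∀ x ∈ Ioo a b, HasDerivAt g (F x - u x) x)
    (ha : ∀ᶠ x in 𝓝[>] a, 0 ≤ g x) (hb : ∀ᶠ x in 𝓝[<] b, g x ≤ 0) :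
    ∫ x in Ioo a b, F x ≤ ∫ x in Ioo a b, u x :=
  le_of_tendsto_of_tendsto (tendsto_intervalIntegral_Ioo hab hFi)
    (tendsto_intervalIntegral_Ioo hab hu)
    (eventually_intervalIntegral_le_of_hasDerivAt_sub hab hF hu hg ha hb)

lemma bddAbove_image_Ioo_of_monotoneOn_of_antitoneOn {f : ℝ → ℝ} {p q : ℝ} (hp : p ∈ Ioo a b)
    (hq : q ∈ Ioo a b) (hf : ContinuousOn f (Ioo a b)) (hmono : MonotoneOn f (Ioc a p))
    (hanti : AntitoneOn f (Ico q b)) : BddAbove (f '' Ioo a b) := by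
  have hcover : Ioo a b ⊆ Ioc a p ∪ Icc p q ∪ Ico q b := fun x hx => by
    rcases le_total x p with hxp | hpx
    · exact .inl (.inl ⟨hx.1, hxp⟩)
    · exact (le_total x q).elim (fun h => .inl (.inr ⟨hpx, h⟩)) fun h => .inr ⟨h, hx.2⟩
  refine BddAbove.mono (image_mono hcover) ?_
  rw [image_union, image_union]
  refine (BddAbove.union ?_ ?_).union ?_
  · exact ⟨f p, forall_mem_image.2 fun x hx => hmono hx ⟨hp.1, le_rfl⟩ hx.2⟩
  · exact (isCompact_Icc.image_of_continuousOn (hf.mono (Icc_subset_Ioo hp.1 hq.2))).bddAbove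
  · exact ⟨f q, forall_mem_image.2 fun x hx => hanti ⟨le_rfl, hq.2⟩ hx hx.1⟩

lemma exists_measurable_pos_hasDerivAt_mul {k : ℝ → ℝ} (hk : ContinuousOn k (Ioo a b)) :
    ∃ f : ℝ → ℝ, Measurable f ∧ ∀ x ∈ Ioo a b, 0 < f x ∧ HasDerivAt f (k x * f x) x := by
  classical
  rcases (Ioo a b).eq_empty_or_nonempty with hempty | ⟨m, hm⟩
  · exact ⟨0, measurable_zero, by simp [hempty]⟩
  set φ : ℝ → ℝ := fun x => ∫ t in m..x, k t
  have hφ : ∀ x ∈ Ioo a b, HasDerivAt φ (k x) x := fun x hx =>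
    intervalIntegral.integral_hasDerivAt_right
      (hk.mono (ordConnected_Ioo.uIcc_subset hm hx)).intervalIntegrable
      (hk.stronglyMeasurableAtFilter isOpen_Ioo x hx) (hk.continuousAt (Ioo_mem_nhds hx.1 hx.2))
  have hφc : ContinuousOn φ (Ioo a b) := fun x hx => (hφ x hx).continuousAt.continuousWithinAt
  set f : ℝ → ℝ := (Ioo a b).piecewise (fun x => exp (φ x)) 0
  have hf : EqOn f (fun x => exp (φ x)) (Ioo a b) := piecewise_eqOn _ _ _
  refine ⟨f, (hφc.rexp).measurable_piecewise continuousOn_const measurableSet_Ioo,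
    fun x hx => ⟨hf hx ▸ exp_pos _, ?_⟩⟩
  rw [hf hx, mul_comm]
  exact (hφ x hx).exp.congr_of_eventuallyEq (hf.eventuallyEq_of_mem (Ioo_mem_nhds hx.1 hx.2))

lemma integrableOn_of_continuousOn_of_nonneg_of_le {s : Set ℝ} {φ ψ : ℝ → ℝ}
    (hs : MeasurableSet s) (hφ : ContinuousOn φ s) (hψ : IntegrableOn ψ s)
    (h₀ : ∀ x ∈ s, 0 ≤ φ x) (hle : ∀ x ∈ s, φ x ≤ ψ x) : IntegrableOn φ s :=
  Integrable.mono' hψ (hφ.aestronglyMeasurable hs) <|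
    (ae_restrict_mem hs).mono fun x hx => (Real.norm_of_nonneg (h₀ x hx)).trans_le (hle x hx)

lemma setIntegral_lt_of_le_of_measure_lt_pos {α : Type*} [MeasurableSpace α] {μ : Measure α}
    {s : Set α} {φ ψ : α → ℝ} (hs : MeasurableSet s) (hφ : IntegrableOn φ s μ)
    (hψ : IntegrableOn ψ s μ) (hle : ∀ x ∈ s, φ x ≤ ψ x) (hlt : 0 < μ {x ∈ s | φ x < ψ x}) :
    ∫ x in s, φ x ∂μ < ∫ x in s, ψ x ∂μ := by
  rw [← sub_pos, ← integral_sub hψ hφ, setIntegral_pos_iff_support_of_nonneg_ae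
    ((ae_restrict_mem hs).mono fun x hx => sub_nonneg.2 (hle x hx)) (hψ.sub hφ)]
  exact hlt.trans_le (measure_mono fun x hx => ⟨(sub_pos.2 hx.2).ne', hx.1⟩)

end Integrals

section IntegrableAtFilter

variable {α : Type*} [MeasurableSpace α] {μ : Measure α} {l : Filter α} [l.IsMeasurablyGenerated]

lemma frequently_lt_of_not_integrableAtFilter {h v : α → ℝ} {η : ℝ} (hη : 0 < η)
    (hmeas : StronglyMeasurableAtFilter h l μ) (hh : ¬ IntegrableAtFilter h l μ)
    (hvh : IntegrableAtFilter (fun x => v x * h x) l μ) : ∃ᶠ x in l, v x < η := by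
  refine fun hv => hh (Asymptotics.IsBigO.integrableAtFilter ?_ hmeas hvh)
  refine Asymptotics.IsBigO.of_bound η⁻¹ (hv.mono fun x hx => ?_)
  rw [norm_mul, ← mul_assoc, inv_mul_eq_div]
  exact le_mul_of_one_le_left (norm_nonneg _)
    ((one_le_div hη).2 ((not_lt.1 hx).trans (Real.le_norm_self _)))

lemma not_integrableAtFilter_inv_of_tendsto_div {G g : α → ℝ} {r : ℝ} (hr : r ≠ 0)
    (hmeas : StronglyMeasurableAtFilter (fun x => (g x)⁻¹) l μ)
    (hg : ¬ IntegrableAtFilter (fun x => (g x)⁻¹) l μ)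
    (hlim : Tendsto (fun x => G x / g x) l (𝓝 r)) :
    ¬ IntegrableAtFilter (fun x => (G x)⁻¹) l μ := by
  refine fun hG => hg (Asymptotics.IsBigO.integrableAtFilter ?_ hmeas hG)
  have hbound : (fun x => G x / g x * (G x)⁻¹) =O[l] fun x => 1 * (G x)⁻¹ :=
    (hlim.isBigO_one ℝ).mul (Asymptotics.isBigO_refl _ _)
  refine hbound.congr' ?_ (.of_forall fun x => one_mul _)
  filter_upwards [hlim.eventually_ne hr] with x hx
  have hGx : G x ≠ 0 := left_ne_zero_of_mul (div_eq_mul_inv (G x) (g x) ▸ hx)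
  field_simp

end IntegrableAtFilter

lemma not_integrableAtFilter_mul_sub_inv_nhdsGT {k : ℝ} (hk : k ≠ 0) (z : ℝ) :
    ¬ IntegrableAtFilter (fun x => (k * (x - z))⁻¹) (𝓝[>] z) := by
  rintro ⟨s, hs, hint⟩
  obtain ⟨u, hzu, hsub⟩ := mem_nhdsGT_iff_exists_Ioo_subset.1 hs
  have hint' : IntervalIntegrable (fun x => (x - z)⁻¹) volume z u := by
    rw [intervalIntegrable_iff_integrableOn_Ioo_of_le (le_of_lt hzu)]
    refine ((hint.mono_set hsub).const_mul k).congr (.of_forall fun x => ?_)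
    simp only [mul_inv, mul_inv_cancel_left₀ hk]
  rcases intervalIntegrable_sub_inv_iff.1 hint' with h | h
  exacts [hzu.ne h, h left_mem_uIcc]

lemma not_integrableAtFilter_mul_sub_inv_nhdsLT {k : ℝ} (hk : k ≠ 0) (z : ℝ) :
    ¬ IntegrableAtFilter (fun x => (k * (z - x))⁻¹) (𝓝[<] z) := by
  rintro ⟨s, hs, hint⟩
  obtain ⟨u, huz, hsub⟩ := mem_nhdsLT_iff_exists_Ioo_subset.1 hs
  have hint' : IntervalIntegrable (fun x => (x - z)⁻¹) volume u z := by
    rw [intervalIntegrable_iff_integrableOn_Ioo_of_le (le_of_lt huz)]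
    refine ((hint.mono_set hsub).const_mul (-k)).congr (.of_forall fun x => ?_)
    simp only [mul_inv, neg_mul, mul_inv_cancel_left₀ hk, ← inv_neg, neg_sub]
  rcases intervalIntegrable_sub_inv_iff.1 hint' with h | h
  exacts [huz.ne h, h right_mem_uIcc]

section Riccati

variable {M c κ : ℝ} {h w : ℝ → ℝ}

/-- The Riccati equation `w' = (c² - w²) h - κ` on `(0, M)`, satisfied by the logarithmic
derivative `w = G u' / u` of a solution of `(G u')' = c² u / G - κ u` when `h = 1 / G`. The last two
inequalities, together with `|w| ≤ c`, encode the boundary values `w(0⁺) = c` and `w(M⁻) = -c`. -/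
structure IsRiccatiSolution (M c κ : ℝ) (h w : ℝ → ℝ) : Prop where
  hasDerivAt : ∀ a ∈ Ioo 0 M, HasDerivAt w ((c ^ 2 - w a ^ 2) * h a - κ) a
  abs_le : ∀ a ∈ Ioo 0 M, |w a| ≤ c
  sub_le : ∀ a ∈ Ioo 0 M, c - κ * a ≤ w a
  le_sub : ∀ a ∈ Ioo 0 M, w a ≤ κ * (M - a) - c

/-- The Riccati vector field with `w²` replaced by `min(|w|, c)²`: it is globally Lipschitz in `w`,
agrees with the Riccati field where `|w| ≤ c`, and is the constant `-κ` where `|w| ≥ c`. -/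
def truncatedRiccati (c : ℝ) (h : ℝ → ℝ) (κ t x : ℝ) : ℝ := (c ^ 2 - min |x| c ^ 2) * h t - κ

/-- A solution on `[0, M]` of the truncated Riccati equation with initial value `c`. -/
structure IsTruncatedOrbit (M c κ : ℝ) (h w : ℝ → ℝ) : Prop where
  apply_zero : w 0 = c
  hasDerivWithinAt : ∀ t ∈ Icc 0 M,
    HasDerivWithinAt w (truncatedRiccati c h κ t (w t)) (Icc 0 M) t

lemma sq_min_abs_le (hc : 0 ≤ c) (x : ℝ) : min |x| c ^ 2 ≤ c ^ 2 :=
  pow_le_pow_left₀ (le_min (abs_nonneg x) hc) (min_le_right _ _) 2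

lemma abs_sq_min_abs_sub_sq_min_abs_le (hc : 0 ≤ c) (x y : ℝ) :
    |min |x| c ^ 2 - min |y| c ^ 2| ≤ 2 * c * |x - y| := by
  have hsum : |min |x| c + min |y| c| ≤ 2 * c := by
    rw [abs_of_nonneg (add_nonneg (le_min (abs_nonneg x) hc) (le_min (abs_nonneg y) hc))]
    linarith [min_le_right |x| c, min_le_right |y| c]
  have hdiff : |min |x| c - min |y| c| ≤ |x - y| := calc
    |min |x| c - min |y| c| ≤ max (abs (|x| - |y|)) |c - c| := abs_min_sub_min_le_max _ _ _ _
    _ ≤ |x - y| := by simpa using abs_abs_sub_abs_le x y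
  rw [sq_sub_sq, abs_mul]
  gcongr

lemma lipschitzWith_truncatedRiccati {c B : ℝ≥0} (h₀ : ∀ t, 0 ≤ h t) (hB : ∀ t, h t ≤ B)
    (κ t : ℝ) : LipschitzWith (2 * c * B) (truncatedRiccati c h κ t) := by
  refine LipschitzWith.of_dist_le_mul fun x y => ?_
  have hdiff : truncatedRiccati c h κ t x - truncatedRiccati c h κ t y
      = -((min |x| c ^ 2 - min |y| c ^ 2) * h t) := by
    simp only [truncatedRiccati]
    ring
  rw [Real.dist_eq, Real.dist_eq, hdiff, abs_neg, abs_mul, abs_of_nonneg (h₀ t)]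
  calc |min |x| (c : ℝ) ^ 2 - min |y| (c : ℝ) ^ 2| * h t
      ≤ 2 * c * |x - y| * B :=
        mul_le_mul (abs_sq_min_abs_sub_sq_min_abs_le c.2 x y) (hB t) (h₀ t) (by positivity)
    _ = (2 * c * B : ℝ≥0) * |x - y| := by push_cast; ring

lemma abs_truncatedRiccati_le {B : ℝ} (hc : 0 ≤ c) (h₀ : ∀ t, 0 ≤ h t) (hB : ∀ t, h t ≤ B)
    (t x : ℝ) : |truncatedRiccati c h κ t x| ≤ c ^ 2 * B + |κ| := by
  refine (abs_sub _ _).trans (add_le_add_left ?_ _)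
  rw [abs_of_nonneg (mul_nonneg (sub_nonneg.2 (sq_min_abs_le hc x)) (h₀ t))]
  exact mul_le_mul (sub_le_self _ (sq_nonneg _)) (hB t) (h₀ t) (sq_nonneg c)

lemma exists_isTruncatedOrbit (hM : 0 ≤ M) {c B : ℝ≥0} (hh : Continuous h) (h₀ : ∀ t, 0 ≤ h t)
    (hB : ∀ t, h t ≤ B) (κ : ℝ) : ∃ w, IsTruncatedOrbit M c κ h w := by
  obtain ⟨w, hw₀, hw⟩ := exists_forall_hasDerivWithinAt_Icc_of_lipschitzWith
    (L := c ^ 2 * B + ‖κ‖₊) hM (fun t _ => lipschitzWith_truncatedRiccati (c := c) h₀ hB κ t)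
    (fun x => by unfold truncatedRiccati; fun_prop)
    (fun t _ x => by simpa using abs_truncatedRiccati_le c.2 h₀ hB t x) (c : ℝ)
  exact ⟨w, hw₀, hw⟩

namespace IsTruncatedOrbit

lemma continuousOn (hw : IsTruncatedOrbit M c κ h w) : ContinuousOn w (Icc 0 M) :=
  fun t ht => (hw.hasDerivWithinAt t ht).continuousWithinAt

lemma hasDerivWithinAt_Ici (hw : IsTruncatedOrbit M c κ h w) {t : ℝ} (ht : t ∈ Ico 0 M) :
    HasDerivWithinAt w (truncatedRiccati c h κ t (w t)) (Ici t) t :=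
  hasDerivWithinAt_Ici_of_Icc ht (hw.hasDerivWithinAt t (Ico_subset_Icc_self ht))

lemma monotoneOn_add_mul (hw : IsTruncatedOrbit M c κ h w) (hc : 0 ≤ c) (h₀ : ∀ t, 0 ≤ h t) :
    MonotoneOn (fun t => w t + κ * t) (Icc 0 M) := by
  refine monotoneOn_of_hasDerivWithinAt_nonneg (convex_Icc 0 M)
    (hw.continuousOn.add (by fun_prop))
    (fun t ht => ((hw.hasDerivWithinAt t (interior_subset ht)).mono interior_subset).add
      ((hasDerivAt_id t).const_mul κ).hasDerivWithinAt) fun t _ => ?_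
  have := mul_nonneg (sub_nonneg.2 (sq_min_abs_le hc (w t))) (h₀ t)
  simp only [truncatedRiccati]
  linarith

-- Outside `(-c, c)` the field is `-κ < 0`, so such levels can only be crossed downwards.
lemma le_of_le (hw : IsTruncatedOrbit M c κ h w) (hκ : 0 < κ) {s t y : ℝ} (hs : 0 ≤ s)
    (hst : s ≤ t) (ht : t ≤ M) (hy : c ≤ |y|) (hsy : w s ≤ y) : w t ≤ y := by
  refine image_le_of_deriv_right_lt_deriv_boundary (B := fun _ => y) (B' := fun _ => 0)
    (hw.continuousOn.mono (Icc_subset_Icc hs ht))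
    (fun r hr => hw.hasDerivWithinAt_Ici ⟨hs.trans hr.1, hr.2.trans_le ht⟩) hsy
    (fun r => hasDerivAt_const r y) (fun r _ hry => ?_) ⟨hst, le_rfl⟩
  simp [truncatedRiccati, hry, min_eq_right hy, hκ]

lemma apply_right_le_neg (hw : IsTruncatedOrbit M c κ h w) (hc : 0 ≤ c) (hκ₀ : 0 < κ)
    {m₁ m₂ B : ℝ} (hm₁ : 0 ≤ m₁) (hm : m₁ < m₂) (hm₂ : m₂ ≤ M) (h₀ : ∀ t, 0 ≤ h t)
    (hB : ∀ t ∈ Icc m₁ m₂, h t ≤ B) (hκ : c ^ 2 * B + 2 * c / (m₂ - m₁) ≤ κ) : w M ≤ -c := by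
  have hM : m₁ ≤ M := hm.le.trans hm₂
  have hwm₁ : w m₁ ≤ c :=
    hw.le_of_le hκ₀ le_rfl hm₁ hM (le_abs_self c) hw.apply_zero.le
  have hderiv : ∀ t ∈ Ico m₁ m₂, truncatedRiccati c h κ t (w t) ≤ -(2 * c / (m₂ - m₁)) :=
    fun t ht => by
      have : (c ^ 2 - min |w t| c ^ 2) * h t ≤ c ^ 2 * B :=
        mul_le_mul (sub_le_self _ (sq_nonneg _)) (hB t (Ico_subset_Icc_self ht)) (h₀ t)
          (sq_nonneg c)
      simp only [truncatedRiccati]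
      linarith
  have hwm₂ : w m₂ ≤ c + -(2 * c / (m₂ - m₁)) * (m₂ - m₁) :=
    image_le_of_deriv_right_le_deriv_boundary (hw.continuousOn.mono (Icc_subset_Icc hm₁ hm₂))
      (fun t ht => hw.hasDerivWithinAt_Ici ⟨hm₁.trans ht.1, ht.2.trans_le hm₂⟩)
      (B := fun t => c + -(2 * c / (m₂ - m₁)) * (t - m₁)) (by simpa using hwm₁) (by fun_prop)
      (fun t _ => by
        simpa using ((((hasDerivAt_id t).sub_const m₁).const_mul
          (-(2 * c / (m₂ - m₁)))).const_add c).hasDerivWithinAt) hderiv ⟨hm.le, le_rfl⟩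
  have hcancel : 2 * c / (m₂ - m₁) * (m₂ - m₁) = 2 * c := div_mul_cancel₀ _ (sub_pos.2 hm).ne'
  exact hw.le_of_le hκ₀ (hm₁.trans hm.le) hm₂ le_rfl (by rw [abs_neg, abs_of_nonneg hc])
    (by linarith)

lemma isRiccatiSolution (hw : IsTruncatedOrbit M c κ h w) (hc : 0 < c) (hM : 0 ≤ M)
    (hκ : 0 ≤ κ) (h₀ : ∀ t, 0 ≤ h t) (hwM : w M = -c) : IsRiccatiSolution M c κ h w := by
  have hmono := hw.monotoneOn_add_mul hc.le h₀
  have hdrift := hmono ⟨le_rfl, hM⟩ ⟨hM, le_rfl⟩ hM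
  have hκ₀ : 0 < κ := hκ.lt_of_ne fun h => by
    simp only [hw.apply_zero, hwM, ← h] at hdrift
    linarith
  have habs : ∀ a ∈ Ioo 0 M, |w a| ≤ c := fun a ha => by
    refine _root_.abs_le.2 ⟨?_, hw.le_of_le hκ₀ le_rfl ha.1.le ha.2.le (le_abs_self c)
      hw.apply_zero.le⟩
    by_contra! hlt
    have : c ≤ |w a| := (lt_abs.2 (.inr (by linarith))).le
    linarith [hw.le_of_le hκ₀ ha.1.le ha.2.le le_rfl this le_rfl]
  refine ⟨fun a ha => ?_, habs, fun a ha => ?_, fun a ha => ?_⟩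
  · have := (hw.hasDerivWithinAt a (Ioo_subset_Icc_self ha)).hasDerivAt (Icc_mem_nhds ha.1 ha.2)
    rwa [truncatedRiccati, min_eq_left (habs a ha), sq_abs] at this
  · have := hmono ⟨le_rfl, hM⟩ (Ioo_subset_Icc_self ha) ha.1.le
    simp only [hw.apply_zero] at this
    linarith
  · have := hmono (Ioo_subset_Icc_self ha) ⟨hM, le_rfl⟩ ha.2.le
    simp only [hwM] at this
    linarith

end IsTruncatedOrbit

lemma exists_isRiccatiSolution_of_continuous (hc : 0 < c) {m₁ m₂ B B' : ℝ}
    (hm₁ : 0 ≤ m₁) (hm : m₁ < m₂) (hm₂ : m₂ ≤ M) (hh : Continuous h) (h₀ : ∀ t, 0 ≤ h t)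
    (hB : ∀ t, h t ≤ B) (hB' : ∀ t ∈ Icc m₁ m₂, h t ≤ B') :
    ∃ κ ∈ Icc 0 (c ^ 2 * B' + 2 * c / (m₂ - m₁)), ∃ w, IsRiccatiSolution M c κ h w := by
  have hM : 0 ≤ M := hm₁.trans (hm.le.trans hm₂)
  set K := c ^ 2 * B' + 2 * c / (m₂ - m₁)
  have hB'₀ : 0 ≤ B' := (h₀ m₁).trans (hB' m₁ ⟨le_rfl, hm.le⟩)
  have hK : 0 < K := add_pos_of_nonneg_of_pos (by positivity) (div_pos (by linarith) (by linarith))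
  lift c to ℝ≥0 using hc.le
  lift B to ℝ≥0 using (h₀ 0).trans (hB 0)
  choose W hW using exists_isTruncatedOrbit (c := c) hM hh h₀ hB
  have hcont : Continuous fun κ => W κ M :=
    continuous_apply_right_of_parametric_ODE hM (v := truncatedRiccati c h)
      (lipschitzWith_truncatedRiccati h₀ hB)
      (fun κ κ' t x => (dist_sub_left _ κ κ').le)
      (fun κ => (hW κ).apply_zero) fun κ => (hW κ).hasDerivWithinAt
  have hleft : -(c : ℝ) ≤ W 0 M := by
    have := (hW 0).monotoneOn_add_mul c.2 h₀ ⟨le_rfl, hM⟩ ⟨hM, le_rfl⟩ hM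
    simp only [(hW 0).apply_zero] at this
    linarith
  have hright : W K M ≤ -c := (hW K).apply_right_le_neg c.2 hK hm₁ hm hm₂ h₀ hB' le_rfl
  obtain ⟨κ, hκ, hκM⟩ := intermediate_value_Icc' hK.le hcont.continuousOn ⟨hright, hleft⟩
  exact ⟨κ, hκ, W κ, (hW κ).isRiccatiSolution hc hM hκ.1 h₀ hκM⟩

namespace IsRiccatiSolution

lemma continuousOn (hw : IsRiccatiSolution M c κ h w) : ContinuousOn w (Ioo 0 M) :=
  fun a ha => (hw.hasDerivAt a ha).continuousAt.continuousWithinAt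

lemma sq_le (hw : IsRiccatiSolution M c κ h w) {a : ℝ} (ha : a ∈ Ioo 0 M) : w a ^ 2 ≤ c ^ 2 :=
  sq_le_sq.2 ((hw.abs_le a ha).trans (le_abs_self c))

lemma abs_deriv_le (hw : IsRiccatiSolution M c κ h w) {a : ℝ} (ha : a ∈ Ioo 0 M) :
    |(c ^ 2 - w a ^ 2) * h a - κ| ≤ c ^ 2 * |h a| + |κ| := by
  refine (abs_sub _ _).trans (add_le_add_left ?_ _)
  rw [abs_mul, abs_of_nonneg (sub_nonneg.2 (hw.sq_le ha))]
  exact mul_le_mul_of_nonneg_right (sub_le_self _ (sq_nonneg _)) (abs_nonneg _)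

lemma of_tendsto {ι : Type*} {l : Filter ι} [l.NeBot] {κs : ι → ℝ} {hs ws : ι → ℝ → ℝ}
    (hsol : ∀ n, IsRiccatiSolution M c (κs n) (hs n) (ws n)) (hκ : Tendsto κs l (𝓝 κ))
    (hh : ∀ a ∈ Ioo 0 M, Tendsto (fun q : ι × ℝ => hs q.1 q.2) (l ×ˢ 𝓝 a) (𝓝 (h a)))
    (hw : ∀ a ∈ Ioo 0 M, Tendsto (fun n => ws n a) l (𝓝 (w a))) : IsRiccatiSolution M c κ h w where
  hasDerivAt a ha := by
    have hIoo : Ioo 0 M ∈ 𝓝 a := Ioo_mem_nhds ha.1 ha.2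
    have hmem : ∀ᶠ q : ι × ℝ in l ×ˢ 𝓝 a, q.2 ∈ Ioo 0 M := tendsto_snd hIoo
    have hκ' : Tendsto (fun q : ι × ℝ => κs q.1) (l ×ˢ 𝓝 a) (𝓝 κ) := hκ.comp tendsto_fst
    have hderiv : ∀ᶠ q in l ×ˢ 𝓝 a, HasDerivAt (ws q.1)
        ((c ^ 2 - ws q.1 q.2 ^ 2) * hs q.1 q.2 - κs q.1) q.2 :=
      hmem.mono fun q hq => (hsol q.1).hasDerivAt q.2 hq
    have hbound : ∀ᶠ q in l ×ˢ 𝓝 a, ‖(c ^ 2 - ws q.1 q.2 ^ 2) * hs q.1 q.2 - κs q.1‖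
        ≤ c ^ 2 * |h a| + |κ| + 1 := by
      filter_upwards [hmem, (((hh a ha).abs.const_mul (c ^ 2)).add hκ'.abs).eventually_le_const
        (lt_add_one _)] with q hq hle
      exact ((hsol q.1).abs_deriv_le hq).trans hle
    have hjoint := tendsto_uncurry_of_hasDerivAt_of_norm_le
      (f' := fun n t => (c ^ 2 - ws n t ^ 2) * hs n t - κs n) hderiv hbound (hw a ha)
    exact hasDerivAt_of_tendsto_uncurry (f' := fun n t => (c ^ 2 - ws n t ^ 2) * hs n t - κs n)
      hderiv ((((hjoint.pow 2).const_sub _).mul (hh a ha)).sub hκ') (eventually_of_mem hIoo hw)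
  abs_le a ha := le_of_tendsto (hw a ha).abs (.of_forall fun n => (hsol n).abs_le a ha)
  sub_le a ha := le_of_tendsto_of_tendsto' ((hκ.mul_const a).const_sub c) (hw a ha)
    fun n => (hsol n).sub_le a ha
  le_sub a ha := le_of_tendsto_of_tendsto' (hw a ha) ((hκ.mul_const (M - a)).sub_const c)
    fun n => (hsol n).le_sub a ha

end IsRiccatiSolution

lemma exists_tendsto_ultrafilter_of_mem_compact {ι X : Type*} [TopologicalSpace X] {K : Set X}
    (hK : IsCompact K) (U : Ultrafilter ι) {u : ι → X} (hu : ∀ n, u n ∈ K) :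
    ∃ x ∈ K, Tendsto u U (𝓝 x) :=
  hK.ultrafilter_le_nhds' (U.map u) (Ultrafilter.mem_map.2 (univ_mem' hu))

lemma exists_bounded_continuous_tendsto_of_continuousOn_Ioo (hM : 0 < M)
    (hh : ContinuousOn h (Ioo 0 M)) (h₀ : ∀ a ∈ Ioo 0 M, 0 ≤ h a) :
    ∃ hs : ℕ → ℝ → ℝ, (∀ n, Continuous (hs n)) ∧ (∀ n t, 0 ≤ hs n t) ∧
      (∀ n, ∃ B, ∀ t, hs n t ≤ B) ∧ (∀ n, ∀ t ∈ Icc (M / 4) (3 * M / 4), hs n t = h t) ∧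
      ∀ a ∈ Ioo 0 M, Tendsto (fun q : ℕ × ℝ => hs q.1 q.2) (atTop ×ˢ 𝓝 a) (𝓝 (h a)) := by
  obtain ⟨e, -, he, he₀⟩ := exists_seq_strictAnti_tendsto' (show (0 : ℝ) < M / 4 by positivity)
  have hle n : e n ≤ M - e n := by linarith [(he n).2]
  have hsub n : Icc (e n) (M - e n) ⊆ Ioo 0 M :=
    Icc_subset_Ioo (he n).1 (sub_lt_self M (he n).1)
  have heq n {t} (ht : t ∈ Icc (e n) (M - e n)) :
      IccExtend (hle n) ((Icc (e n) (M - e n)).domRestrict h) t = h t := IccExtend_of_mem _ _ ht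
  refine ⟨fun n => IccExtend (hle n) ((Icc (e n) (M - e n)).domRestrict h),
    fun n => (hh.mono (hsub n)).domRestrict.Icc_extend', fun n t => h₀ _ (hsub n (Subtype.prop _)),
    fun n => ?_, fun n t ht => heq n ⟨by linarith [(he n).2, ht.1], by linarith [(he n).2, ht.2]⟩,
    fun a ha => ?_⟩
  · obtain ⟨B, hB⟩ := isCompact_Icc.bddAbove_image (hh.mono (hsub n))
    exact ⟨B, fun t => hB (mem_image_of_mem h (Subtype.prop _))⟩
  · refine ((hh.continuousAt (Ioo_mem_nhds ha.1 ha.2)).tendsto.comp tendsto_snd).congr' ?_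
    have hnear : ∀ᶠ q : ℕ × ℝ in atTop ×ˢ 𝓝 a, e q.1 < q.2 ∧ e q.1 < M - q.2 :=
      ((he₀.comp tendsto_fst).eventually_lt tendsto_snd ha.1).and
        ((he₀.comp tendsto_fst).eventually_lt (tendsto_snd.const_sub M) (sub_pos.2 ha.2))
    exact hnear.mono fun q hq => (heq q.1 ⟨hq.1.le, by linarith [hq.2]⟩).symm

theorem exists_isRiccatiSolution (hM : 0 < M) (hc : 0 < c) (hh : ContinuousOn h (Ioo 0 M))
    (h₀ : ∀ a ∈ Ioo 0 M, 0 ≤ h a) : ∃ κ w, IsRiccatiSolution M c κ h w := by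
  obtain ⟨hs, hscont, hs₀, hsB, hsmid, hslim⟩ :=
    exists_bounded_continuous_tendsto_of_continuousOn_Ioo hM hh h₀
  choose B hB using hsB
  have hmid : Icc (M / 4) (3 * M / 4) ⊆ Ioo 0 M := Icc_subset_Ioo (by linarith) (by linarith)
  obtain ⟨B', hB'⟩ := isCompact_Icc.bddAbove_image (hh.mono hmid)
  choose κs hκs ws hws using fun n => exists_isRiccatiSolution_of_continuous
    (M := M) (m₁ := M / 4) (m₂ := 3 * M / 4) hc (by linarith) (by linarith) (by linarith)
    (hscont n) (hs₀ n) (hB n) fun t ht => (hsmid n t ht).trans_le (hB' (mem_image_of_mem h ht))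
  set U : Ultrafilter ℕ := Ultrafilter.of atTop
  obtain ⟨κ, -, hκ⟩ := exists_tendsto_ultrafilter_of_mem_compact isCompact_Icc U hκs
  have hlim a : ∃ y, a ∈ Ioo 0 M → Tendsto (fun n => ws n a) U (𝓝 y) := by
    by_cases ha : a ∈ Ioo 0 M
    · obtain ⟨y, -, hy⟩ := exists_tendsto_ultrafilter_of_mem_compact isCompact_Icc U
        fun n => _root_.abs_le.1 ((hws n).abs_le a ha)
      exact ⟨y, fun _ => hy⟩
    · exact ⟨0, fun ha' => absurd ha' ha⟩
  choose w hw using hlim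
  exact ⟨κ, w, .of_tendsto hws hκ
    (fun a ha => (hslim a ha).mono_left (prod_mono_left _ (Ultrafilter.of_le _))) hw⟩

namespace IsRiccatiSolution

lemma two_mul_le (hw : IsRiccatiSolution M c κ h w) (hM : 0 < M) : 2 * c ≤ κ * M := by
  have hmid : M / 2 ∈ Ioo 0 M := ⟨half_pos hM, half_lt_self hM⟩
  linarith [hw.sub_le _ hmid, hw.le_sub _ hmid]

lemma pos (hw : IsRiccatiSolution M c κ h w) (hM : 0 < M) (hc : 0 < c) : 0 < κ :=
  pos_of_mul_pos_left (by linarith [hw.two_mul_le hM]) hM.le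

lemma sq_lt (hw : IsRiccatiSolution M c κ h w) (hM : 0 < M) (hc : 0 < c) {a : ℝ}
    (ha : a ∈ Ioo 0 M) : w a ^ 2 < c ^ 2 := by
  refine (hw.sq_le ha).lt_of_ne fun heq => ?_
  have hmax : IsLocalMax (fun x => w x ^ 2) a :=
    eventually_of_mem (Ioo_mem_nhds ha.1 ha.2) fun x hx => (hw.sq_le hx).trans_eq heq.symm
  have hcrit := hmax.hasDerivAt_eq_zero ((hw.hasDerivAt a ha).pow 2)
  have hw₀ : w a ≠ 0 := by
    rw [← sq_pos_iff, heq]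
    positivity
  simp [heq, hw₀, (hw.pos hM hc).ne'] at hcrit

end IsRiccatiSolution

end Riccati

section LowerBound

variable {M ν c κ : ℝ} {G h w f : ℝ → ℝ}

lemma riccati_add_sq_div_eq {g : ℝ} (hg : g ≠ 0) (c κ w x y : ℝ) :
    ((c ^ 2 - w ^ 2) * g⁻¹ - κ) * y ^ 2 + w * (2 * y * x) + (g * x - w * y) ^ 2 / g
      = g * x ^ 2 + c ^ 2 * y ^ 2 / g - κ * y ^ 2 := by
  field_simp
  ring

namespace Admissible

lemma integrableOn_sq (hf : Admissible M G f) : IntegrableOn (fun a => f a ^ 2) (Ioo 0 M) :=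
  hf.2.2.2.1

lemma integrableOn_sq_div (hf : Admissible M G f) :
    IntegrableOn (fun a => f a ^ 2 / G a) (Ioo 0 M) :=
  hf.2.2.2.2.2

lemma hasDerivAt (hf : Admissible M G f) {a : ℝ} (ha : a ∈ Ioo 0 M) :
    HasDerivAt f (deriv f a) a :=
  (hf.2.2.1 a ha).hasDerivAt

lemma integrableOn_energy (hf : Admissible M G f) (ν : ℝ) :
    IntegrableOn (fun a => G a * deriv f a ^ 2 + 4 * π ^ 2 * ν ^ 2 * f a ^ 2 / G a) (Ioo 0 M) := by
  simp only [mul_div_assoc _ (f _ ^ 2)]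
  exact hf.2.2.2.2.1.add (hf.integrableOn_sq_div.const_mul _)

lemma integral_sq_pos (hf : Admissible M G f) : 0 < ∫ a in Ioo 0 M, f a ^ 2 := by
  refine (integral_nonneg fun a => sq_nonneg (f a)).lt_of_ne' fun hzero => hf.2.1 ?_
  rw [integral_eq_zero_iff_of_nonneg (fun a => sq_nonneg (f a)) hf.integrableOn_sq] at hzero
  exact hzero.mono fun a ha => pow_eq_zero_iff two_ne_zero |>.1 ha

end Admissible

namespace IsRiccatiSolution

lemma frequently_abs_mul_sq_lt {l : Filter ℝ} [l.IsMeasurablyGenerated] {η : ℝ}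
    (hw : IsRiccatiSolution M c κ h w) (hc : 0 < c) (hl : Ioo 0 M ∈ l)
    (hh : ContinuousOn h (Ioo 0 M)) (hhl : ¬ IntegrableAtFilter h l)
    (hfh : IntegrableOn (fun a => f a ^ 2 * h a) (Ioo 0 M)) (hη : 0 < η) :
    ∃ᶠ a in l, |w a * f a ^ 2| < η := by
  have hsmall : ∃ᶠ a in l, f a ^ 2 < η / c :=
    frequently_lt_of_not_integrableAtFilter (div_pos hη hc)
      ⟨_, hl, hh.aestronglyMeasurable measurableSet_Ioo⟩ hhl ⟨_, hl, hfh⟩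
  refine (hsmall.and_eventually hl).mono fun a ha => ?_
  rw [abs_mul, abs_of_nonneg (sq_nonneg (f a))]
  calc |w a| * f a ^ 2 ≤ c * f a ^ 2 := by gcongr; exact hw.abs_le a ha.2
    _ < η := by rw [mul_comm]; exact (lt_div_iff₀ hc).1 ha.1

theorem le_rayleigh (hw : IsRiccatiSolution M c κ (fun a => (G a)⁻¹) w) (hM : 0 < M) (hc : 0 < c)
    (hcν : c ^ 2 = 4 * π ^ 2 * ν ^ 2) (hG : ContinuousOn G (Ioo 0 M))
    (hp : ∀ a ∈ Ioo 0 M, 0 < G a) (h₀ : ¬ IntegrableAtFilter (fun a => (G a)⁻¹) (𝓝[>] 0))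
    (h_M : ¬ IntegrableAtFilter (fun a => (G a)⁻¹) (𝓝[<] M)) (hf : Admissible M G f) :
    κ ≤ rayleigh M ν G f := by
  have hinv : ContinuousOn (fun a => (G a)⁻¹) (Ioo 0 M) := hG.inv₀ fun a ha => (hp a ha).ne'
  have hfG : IntegrableOn (fun a => f a ^ 2 * (G a)⁻¹) (Ioo 0 M) := hf.integrableOn_sq_div
  have hnonneg : 0 ≤ ∫ a in Ioo 0 M,
      (G a * deriv f a ^ 2 + 4 * π ^ 2 * ν ^ 2 * f a ^ 2 / G a - κ * f a ^ 2) := by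
    refine setIntegral_Ioo_nonneg_of_hasDerivAt_le (g := fun a => w a * f a ^ 2) hM
      (fun a ha => (hw.hasDerivAt a ha).mul ((hf.hasDerivAt ha).pow 2)) (fun a ha => ?_)
      ((hf.integrableOn_energy ν).sub (hf.integrableOn_sq.const_mul κ)) (fun η hη => ?_)
      fun η hη => ?_
    · have hsq := riccati_add_sq_div_eq (hp a ha).ne' c κ (w a) (deriv f a) (f a)
      have : 0 ≤ (G a * deriv f a - w a * f a) ^ 2 / G a := div_nonneg (sq_nonneg _) (hp a ha).le
      simp only [Pi.pow_apply, Nat.cast_ofNat, Nat.add_one_sub_one, pow_one]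
      rw [← hcν]
      linarith
    · exact (hw.frequently_abs_mul_sq_lt hc (Ioo_mem_nhdsGT hM) hinv h₀ hfG hη).mono
        fun a ha => (abs_lt.1 ha).2
    · exact (hw.frequently_abs_mul_sq_lt hc (Ioo_mem_nhdsLT hM) hinv h_M hfG hη).mono
        fun a ha => (abs_lt.1 ha).1
  rw [integral_sub (hf.integrableOn_energy ν) (hf.integrableOn_sq.const_mul κ),
    integral_const_mul, sub_nonneg] at hnonneg
  exact (le_div_iff₀ hf.integral_sq_pos).2 hnonneg

end IsRiccatiSolution

end LowerBound

section UpperBound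

variable {M ν c κ : ℝ} {G h w f : ℝ → ℝ}

/-- A positive solution on `(0, M)` of `G f' = w f`, used as a trial function for the weight `G`
when `w` solves the Riccati equation of another weight. -/
structure IsTrialFunction (M : ℝ) (G w f : ℝ → ℝ) : Prop where
  measurable : Measurable f
  pos : ∀ a ∈ Ioo 0 M, 0 < f a
  hasDerivAt : ∀ a ∈ Ioo 0 M, HasDerivAt f (w a / G a * f a) a

/-- The density `(w f²)' + κ f²` for a Riccati solution `w` with coefficient `h` and a trial
function `f` with `G f' = w f`. -/
noncomputable def fluxDensity (c : ℝ) (G h w f : ℝ → ℝ) (a : ℝ) : ℝ :=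
  (2 * w a ^ 2 / G a + (c ^ 2 - w a ^ 2) * h a) * f a ^ 2

lemma exists_isTrialFunction (hG : ContinuousOn G (Ioo 0 M)) (hp : ∀ a ∈ Ioo 0 M, 0 < G a)
    (hw : ContinuousOn w (Ioo 0 M)) : ∃ f, IsTrialFunction M G w f := by
  obtain ⟨f, hmeas, hf⟩ :=
    exists_measurable_pos_hasDerivAt_mul (hw.div hG fun a ha => (hp a ha).ne')
  exact ⟨f, hmeas, fun a ha => (hf a ha).1, fun a ha => (hf a ha).2⟩

namespace IsTrialFunction

lemma continuousOn (hf : IsTrialFunction M G w f) : ContinuousOn f (Ioo 0 M) :=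
  fun a ha => (hf.hasDerivAt a ha).continuousAt.continuousWithinAt

lemma monotoneOn (hf : IsTrialFunction M G w f) (hp : ∀ a ∈ Ioo 0 M, 0 < G a) {p : ℝ} (hpM : p < M)
    (hw : ∀ a ∈ Ioc 0 p, 0 ≤ w a) : MonotoneOn f (Ioc 0 p) := by
  have hsub : Ioc 0 p ⊆ Ioo 0 M := fun a ha => ⟨ha.1, ha.2.trans_lt hpM⟩
  refine monotoneOn_of_hasDerivWithinAt_nonneg (convex_Ioc 0 p) (hf.continuousOn.mono hsub)
    (fun a ha => (hf.hasDerivAt a (hsub (interior_subset ha))).hasDerivWithinAt) fun a ha => ?_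
  have ha' := interior_subset ha
  exact mul_nonneg (div_nonneg (hw a ha') (hp a (hsub ha')).le) (hf.pos a (hsub ha')).le

lemma antitoneOn (hf : IsTrialFunction M G w f) (hp : ∀ a ∈ Ioo 0 M, 0 < G a) {q : ℝ} (hq : 0 < q)
    (hw : ∀ a ∈ Ico q M, w a ≤ 0) : AntitoneOn f (Ico q M) := by
  have hsub : Ico q M ⊆ Ioo 0 M := fun a ha => ⟨hq.trans_le ha.1, ha.2⟩
  refine antitoneOn_of_hasDerivWithinAt_nonpos (convex_Ico q M) (hf.continuousOn.mono hsub)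
    (fun a ha => (hf.hasDerivAt a (hsub (interior_subset ha))).hasDerivWithinAt) fun a ha => ?_
  have ha' := interior_subset ha
  exact mul_nonpos_of_nonpos_of_nonneg
    (div_nonpos_of_nonpos_of_nonneg (hw a ha') (hp a (hsub ha')).le) (hf.pos a (hsub ha')).le

lemma energy_eq (hf : IsTrialFunction M G w f) (hp : ∀ a ∈ Ioo 0 M, 0 < G a) {a : ℝ}
    (ha : a ∈ Ioo 0 M) (d : ℝ) :
    G a * deriv f a ^ 2 + d * f a ^ 2 / G a = (w a ^ 2 + d) / G a * f a ^ 2 := by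
  have := (hp a ha).ne'
  rw [(hf.hasDerivAt a ha).deriv]
  field_simp

end IsTrialFunction

lemma fluxDensity_eq (c : ℝ) (G h w f : ℝ → ℝ) (a : ℝ) :
    fluxDensity c G h w f a = (w a ^ 2 + c ^ 2) / G a * f a ^ 2
      + (c ^ 2 - w a ^ 2) * (h a - (G a)⁻¹) * f a ^ 2 := by
  simp only [fluxDensity]
  ring

namespace IsRiccatiSolution

lemma exists_forall_Ioc_nonneg (hw : IsRiccatiSolution M c κ h w) (hM : 0 < M) (hc : 0 < c) :
    ∃ p ∈ Ioo 0 M, ∀ a ∈ Ioc 0 p, 0 ≤ w a := by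
  have hκ := hw.pos hM hc
  have hp : c / κ < M := (div_lt_iff₀' hκ).2 (by linarith [hw.two_mul_le hM])
  refine ⟨c / κ, ⟨div_pos hc hκ, hp⟩, fun a ha => ?_⟩
  linarith [hw.sub_le a ⟨ha.1, ha.2.trans_lt hp⟩, (le_div_iff₀' hκ).1 ha.2]

lemma exists_forall_Ico_nonpos (hw : IsRiccatiSolution M c κ h w) (hM : 0 < M) (hc : 0 < c) :
    ∃ q ∈ Ioo 0 M, ∀ a ∈ Ico q M, w a ≤ 0 := by
  have hκ := hw.pos hM hc
  have hq : 0 < M - c / κ :=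
    sub_pos.2 ((div_lt_iff₀' hκ).2 (by linarith [hw.two_mul_le hM]))
  refine ⟨M - c / κ, ⟨hq, sub_lt_self M (div_pos hc hκ)⟩, fun a ha => ?_⟩
  have hcancel : κ * (c / κ) = c := mul_div_cancel₀ c hκ.ne'
  have : κ * (M - a) ≤ κ * (c / κ) := by gcongr; linarith [ha.1]
  linarith [hw.le_sub a ⟨hq.trans_le ha.1, ha.2⟩]

lemma hasDerivAt_mul_sq (hw : IsRiccatiSolution M c κ h w) (hf : IsTrialFunction M G w f) {a : ℝ}
    (ha : a ∈ Ioo 0 M) :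
    HasDerivAt (fun x => w x * f x ^ 2) (fluxDensity c G h w f a - κ * f a ^ 2) a := by
  refine ((hw.hasDerivAt a ha).mul ((hf.hasDerivAt a ha).fun_pow 2)).congr_deriv ?_
  simp only [fluxDensity]
  ring

lemma fluxDensity_nonneg (hw : IsRiccatiSolution M c κ h w) (hp : ∀ a ∈ Ioo 0 M, 0 < G a)
    (hh : ∀ a ∈ Ioo 0 M, 0 ≤ h a) {a : ℝ} (ha : a ∈ Ioo 0 M) : 0 ≤ fluxDensity c G h w f a := by
  have hG := hp a ha
  have := mul_nonneg (sub_nonneg.2 (hw.sq_le ha)) (hh a ha)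
  unfold fluxDensity
  positivity

lemma energy_le_fluxDensity (hw : IsRiccatiSolution M c κ h w)
    (hle : ∀ a ∈ Ioo 0 M, (G a)⁻¹ ≤ h a) {a : ℝ} (ha : a ∈ Ioo 0 M) :
    (w a ^ 2 + c ^ 2) / G a * f a ^ 2 ≤ fluxDensity c G h w f a := by
  rw [fluxDensity_eq, le_add_iff_nonneg_right]
  exact mul_nonneg (mul_nonneg (sub_nonneg.2 (hw.sq_le ha)) (sub_nonneg.2 (hle a ha)))
    (sq_nonneg _)

end IsRiccatiSolution

namespace IsTrialFunction

lemma integrableOn_sq (hf : IsTrialFunction M G w f) (hw : IsRiccatiSolution M c κ h w)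
    (hM : 0 < M) (hc : 0 < c) (hp : ∀ a ∈ Ioo 0 M, 0 < G a) :
    IntegrableOn (fun a => f a ^ 2) (Ioo 0 M) := by
  obtain ⟨p, hpM, hwp⟩ := hw.exists_forall_Ioc_nonneg hM hc
  obtain ⟨q, hqM, hwq⟩ := hw.exists_forall_Ico_nonpos hM hc
  obtain ⟨C, hC⟩ := bddAbove_image_Ioo_of_monotoneOn_of_antitoneOn hpM hqM hf.continuousOn
    (hf.monotoneOn hp hpM.2 hwp) (hf.antitoneOn hp hqM.1 hwq)
  refine integrableOn_of_continuousOn_of_nonneg_of_le (ψ := fun _ => C ^ 2) measurableSet_Ioo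
    (hf.continuousOn.pow 2) (by simp) (fun a _ => sq_nonneg _) fun a ha => ?_
  exact pow_le_pow_left₀ (hf.pos a ha).le (hC (mem_image_of_mem f ha)) 2

lemma integrableOn_fluxDensity_and_integral_le (hf : IsTrialFunction M G w f)
    (hw : IsRiccatiSolution M c κ h w) (hM : 0 < M) (hc : 0 < c)
    (hG : ContinuousOn G (Ioo 0 M)) (hp : ∀ a ∈ Ioo 0 M, 0 < G a)
    (hh : ContinuousOn h (Ioo 0 M)) (hh₀ : ∀ a ∈ Ioo 0 M, 0 ≤ h a) :
    IntegrableOn (fluxDensity c G h w f) (Ioo 0 M) ∧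
      ∫ a in Ioo 0 M, fluxDensity c G h w f a ≤ κ * ∫ a in Ioo 0 M, f a ^ 2 := by
  obtain ⟨p, hpM, hwp⟩ := hw.exists_forall_Ioc_nonneg hM hc
  obtain ⟨q, hqM, hwq⟩ := hw.exists_forall_Ico_nonpos hM hc
  have hleft : ∀ᶠ a in 𝓝[>] 0, 0 ≤ w a * f a ^ 2 :=
    eventually_of_mem (Ioc_mem_nhdsGT hpM.1) fun a ha => mul_nonneg (hwp a ha) (sq_nonneg _)
  have hright : ∀ᶠ a in 𝓝[<] M, w a * f a ^ 2 ≤ 0 :=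
    eventually_of_mem (Ico_mem_nhdsLT hqM.2) fun a ha =>
      mul_nonpos_of_nonpos_of_nonneg (hwq a ha) (sq_nonneg _)
  have hcont : ContinuousOn (fluxDensity c G h w f) (Ioo 0 M) :=
    ((((hw.continuousOn.pow 2).const_mul 2).div hG fun a ha => (hp a ha).ne').add
      ((continuousOn_const.sub (hw.continuousOn.pow 2)).mul hh)).mul (hf.continuousOn.pow 2)
  have hsq : IntegrableOn (fun a => κ * f a ^ 2) (Ioo 0 M) :=
    (hf.integrableOn_sq hw hM hc hp).const_mul κ
  have hderiv := fun a (ha : a ∈ Ioo 0 M) => hw.hasDerivAt_mul_sq hf ha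
  have hint := integrableOn_Ioo_of_hasDerivAt_sub hM hcont
    (fun a ha => hw.fluxDensity_nonneg hp hh₀ ha) hsq hderiv hleft hright
  rw [← integral_const_mul]
  exact ⟨hint, setIntegral_Ioo_le_of_hasDerivAt_sub hM hcont hint hsq hderiv hleft hright⟩

lemma energy_lt_fluxDensity (hf : IsTrialFunction M G w f) (hw : IsRiccatiSolution M c κ h w)
    (hM : 0 < M) (hc : 0 < c) {a : ℝ} (ha : a ∈ Ioo 0 M) (hlt : (G a)⁻¹ < h a) :
    (w a ^ 2 + c ^ 2) / G a * f a ^ 2 < fluxDensity c G h w f a := by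
  rw [fluxDensity_eq, lt_add_iff_pos_right]
  exact mul_pos (mul_pos (sub_pos.2 (hw.sq_lt hM hc ha)) (sub_pos.2 hlt)) (pow_pos (hf.pos a ha) 2)

lemma integrableOn_sq_div (hf : IsTrialFunction M G w f) (hw : IsRiccatiSolution M c κ h w)
    (hc : 0 < c) (hG : ContinuousOn G (Ioo 0 M)) (hp : ∀ a ∈ Ioo 0 M, 0 < G a)
    (hF : IntegrableOn (fluxDensity c G h w f) (Ioo 0 M))
    (hle : ∀ a ∈ Ioo 0 M, (G a)⁻¹ ≤ h a) :
    IntegrableOn (fun a => f a ^ 2 / G a) (Ioo 0 M) := by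
  refine integrableOn_of_continuousOn_of_nonneg_of_le measurableSet_Ioo
    ((hf.continuousOn.pow 2).div hG fun a ha => (hp a ha).ne') (hF.const_mul (c ^ 2)⁻¹)
    (fun a ha => div_nonneg (sq_nonneg _) (hp a ha).le) fun a ha => ?_
  have := (hp a ha).le
  rw [le_inv_mul_iff₀ (pow_pos hc 2)]
  calc c ^ 2 * (f a ^ 2 / G a) ≤ (w a ^ 2 + c ^ 2) * (f a ^ 2 / G a) := by
        gcongr
        exact le_add_of_nonneg_left (sq_nonneg _)
    _ = (w a ^ 2 + c ^ 2) / G a * f a ^ 2 := by ring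
    _ ≤ fluxDensity c G h w f a := hw.energy_le_fluxDensity hle ha

lemma integrableOn_mul_deriv_sq (hf : IsTrialFunction M G w f) (hw : IsRiccatiSolution M c κ h w)
    (hG : ContinuousOn G (Ioo 0 M)) (hp : ∀ a ∈ Ioo 0 M, 0 < G a)
    (hfG : IntegrableOn (fun a => f a ^ 2 / G a) (Ioo 0 M)) :
    IntegrableOn (fun a => G a * deriv f a ^ 2) (Ioo 0 M) := by
  have hkin : IntegrableOn (fun a => w a ^ 2 * (f a ^ 2 / G a)) (Ioo 0 M) :=
    integrableOn_of_continuousOn_of_nonneg_of_le measurableSet_Ioo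
      ((hw.continuousOn.pow 2).mul
        ((hf.continuousOn.pow 2).div hG fun a ha => (hp a ha).ne')) (hfG.const_mul (c ^ 2))
      (fun a ha => mul_nonneg (sq_nonneg _) (div_nonneg (sq_nonneg _) (hp a ha).le))
      fun a ha => mul_le_mul_of_nonneg_right (hw.sq_le ha)
        (div_nonneg (sq_nonneg _) (hp a ha).le)
  refine hkin.congr_fun (fun a ha => ?_) measurableSet_Ioo
  have := (hp a ha).ne'
  simp only [(hf.hasDerivAt a ha).deriv]
  field_simp

lemma admissible (hf : IsTrialFunction M G w f) (hw : IsRiccatiSolution M c κ h w) (hM : 0 < M)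
    (hc : 0 < c) (hG : ContinuousOn G (Ioo 0 M)) (hp : ∀ a ∈ Ioo 0 M, 0 < G a)
    (hF : IntegrableOn (fluxDensity c G h w f) (Ioo 0 M))
    (hle : ∀ a ∈ Ioo 0 M, (G a)⁻¹ ≤ h a) : Admissible M G f := by
  have hfG := hf.integrableOn_sq_div hw hc hG hp hF hle
  refine ⟨hf.measurable, fun hzero => ?_, fun a ha => (hf.hasDerivAt a ha).differentiableAt,
    hf.integrableOn_sq hw hM hc hp, hf.integrableOn_mul_deriv_sq hw hG hp hfG, hfG⟩
  have : NeBot (ae (volume.restrict (Ioo 0 M))) := ae_restrict_neBot.2 (by simp [hM])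
  obtain ⟨a, hfa, ha⟩ := (hzero.and (ae_restrict_mem measurableSet_Ioo)).exists
  exact (hf.pos a ha).ne' hfa

end IsTrialFunction

theorem exists_admissible_rayleigh_le (hw : IsRiccatiSolution M c κ h w) (hM : 0 < M) (hc : 0 < c)
    (hcν : c ^ 2 = 4 * π ^ 2 * ν ^ 2) (hG : ContinuousOn G (Ioo 0 M))
    (hp : ∀ a ∈ Ioo 0 M, 0 < G a) (hh : ContinuousOn h (Ioo 0 M))
    (hle : ∀ a ∈ Ioo 0 M, (G a)⁻¹ ≤ h a) :
    ∃ f, Admissible M G f ∧ rayleigh M ν G f ≤ κ ∧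
      (0 < volume {a ∈ Ioo 0 M | (G a)⁻¹ < h a} → rayleigh M ν G f < κ) := by
  obtain ⟨f, hf⟩ := exists_isTrialFunction hG hp hw.continuousOn
  obtain ⟨hF, hFκ⟩ := hf.integrableOn_fluxDensity_and_integral_le hw hM hc hG hp hh
    fun a ha => (inv_nonneg.2 (hp a ha).le).trans (hle a ha)
  have hadm := hf.admissible hw hM hc hG hp hF hle
  have henergy : ∀ a ∈ Ioo 0 M, G a * deriv f a ^ 2 + 4 * π ^ 2 * ν ^ 2 * f a ^ 2 / G a
      ≤ fluxDensity c G h w f a := fun a ha => by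
    rw [hf.energy_eq hp ha, ← hcν]
    exact hw.energy_le_fluxDensity hle ha
  refine ⟨f, hadm, (div_le_iff₀ hadm.integral_sq_pos).2 ((setIntegral_mono_on
    (hadm.integrableOn_energy ν) hF measurableSet_Ioo henergy).trans hFκ), fun hpos => ?_⟩
  refine (div_lt_iff₀ hadm.integral_sq_pos).2 (lt_of_lt_of_le ?_ hFκ)
  refine setIntegral_lt_of_le_of_measure_lt_pos measurableSet_Ioo (hadm.integrableOn_energy ν) hF
    henergy (hpos.trans_le (measure_mono fun a ha => ⟨ha.1, ?_⟩))
  rw [hf.energy_eq hp ha.1, ← hcν]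
  exact hf.energy_lt_fluxDensity hw hM hc ha.1 ha.2

end UpperBound

lemma rayleigh_nonneg {M ν : ℝ} {G : ℝ → ℝ} (hp : ∀ a ∈ Ioo 0 M, 0 ≤ G a) (f : ℝ → ℝ) :
    0 ≤ rayleigh M ν G f :=
  div_nonneg (setIntegral_nonneg measurableSet_Ioo fun a ha => by have := hp a ha; positivity)
    (integral_nonneg fun a => sq_nonneg (f a))

lemma kappa1_le_rayleigh {M ν : ℝ} {G f : ℝ → ℝ} (hp : ∀ a ∈ Ioo 0 M, 0 ≤ G a)
    (hf : Admissible M G f) : kappa1 M ν G ≤ rayleigh M ν G f :=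
  csInf_le ⟨0, by rintro _ ⟨f, -, rfl⟩; exact rayleigh_nonneg hp f⟩ ⟨f, hf, rfl⟩

theorem kappa1_antitone_in_weight_closed_general (M ν : ℝ) (hM : 0 < M) (hν : ν ≠ 0)
    (G₁ G₂ : ℝ → ℝ) (hG₁ : ContinuousOn G₁ (Ioo 0 M)) (hG₂ : ContinuousOn G₂ (Ioo 0 M))
    (hp : ∀ a ∈ Ioo 0 M, 0 < G₁ a) (hle : ∀ a ∈ Ioo 0 M, G₁ a ≤ G₂ a)
    (h₀ : ¬ IntegrableAtFilter (fun a => (G₁ a)⁻¹) (𝓝[>] 0))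
    (h_M : ¬ IntegrableAtFilter (fun a => (G₁ a)⁻¹) (𝓝[<] M)) :
    kappa1 M ν G₂ ≤ kappa1 M ν G₁ ∧
      (0 < volume {a ∈ Ioo (0 : ℝ) M | G₁ a < G₂ a} → kappa1 M ν G₂ < kappa1 M ν G₁) := by
  have hp₂ : ∀ a ∈ Ioo 0 M, 0 < G₂ a := fun a ha => (hp a ha).trans_le (hle a ha)
  have hc : 0 < 2 * π * |ν| := by positivity
  have hcν : (2 * π * |ν|) ^ 2 = 4 * π ^ 2 * ν ^ 2 := by rw [mul_pow, mul_pow, sq_abs]; norm_num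
  have hinv : ContinuousOn (fun a => (G₁ a)⁻¹) (Ioo 0 M) := hG₁.inv₀ fun a ha => (hp a ha).ne'
  obtain ⟨κ, w, hw⟩ := exists_isRiccatiSolution hM hc hinv fun a ha => inv_nonneg.2 (hp a ha).le
  have hlower : κ ≤ kappa1 M ν G₁ := by
    obtain ⟨f, hf, -⟩ := exists_admissible_rayleigh_le hw hM hc hcν hG₁ hp hinv fun a _ => le_rfl
    refine le_csInf ⟨_, f, hf, rfl⟩ ?_
    rintro _ ⟨f, hf, rfl⟩
    exact hw.le_rayleigh hM hc hcν hG₁ hp h₀ h_M hf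
  obtain ⟨f, hf, hupper, hstrict⟩ := exists_admissible_rayleigh_le hw hM hc hcν hG₂ hp₂ hinv
    fun a ha => inv_anti₀ (hp a ha) (hle a ha)
  have hκ₁ := kappa1_le_rayleigh (ν := ν) (fun a ha => (hp₂ a ha).le) hf
  refine ⟨hκ₁.trans (hupper.trans hlower), fun hpos => hκ₁.trans_lt ((hstrict ?_).trans_le hlower)⟩
  exact hpos.trans_le (measure_mono fun a ha => ⟨ha.1, inv_strictAnti₀ (hp a ha.1) ha.2⟩)

/-- Monotonicity of the first eigenvalue `κ₁` of the one-dimensional reduced problem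
with respect to the weight function `G` (case of a closed surface: singular behavior
`G(a) ~ 4πa` at `a = 0` and `G(a) ~ 4π(M-a)` at `a = M`). -/
theorem kappa1_antitone_in_weight_closed (M ν : ℝ) (hM : 0 < M) (hν : ν ∈ Ioc (0:ℝ) (1/2))
    (G₁ G₂ : ℝ → ℝ)
    (hs₁ : ContDiffOn ℝ (⊤ : ℕ∞) G₁ (Ioo 0 M)) (hs₂ : ContDiffOn ℝ (⊤ : ℕ∞) G₂ (Ioo 0 M))
    (hp₁ : ∀ a ∈ Ioo (0:ℝ) M, 0 < G₁ a) (hp₂ : ∀ a ∈ Ioo (0:ℝ) M, 0 < G₂ a)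
    (hle : ∀ a ∈ Ioo (0:ℝ) M, G₁ a ≤ G₂ a)
    (h₁ : Tendsto (fun a => G₁ a / (4 * π * a)) (nhdsWithin 0 (Ioo 0 M)) (nhds 1))
    (h₂ : Tendsto (fun a => G₂ a / (4 * π * a)) (nhdsWithin 0 (Ioo 0 M)) (nhds 1))
    (h₁' : Tendsto (fun a => G₁ a / (4 * π * (M - a))) (nhdsWithin M (Ioo 0 M)) (nhds 1))
    (h₂' : Tendsto (fun a => G₂ a / (4 * π * (M - a))) (nhdsWithin M (Ioo 0 M)) (nhds 1)) :
    kappa1 M ν G₂ ≤ kappa1 M ν G₁ ∧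
      (0 < volume {a ∈ Ioo (0:ℝ) M | G₁ a < G₂ a} →
        kappa1 M ν G₂ < kappa1 M ν G₁) := by
  rw [nhdsWithin_Ioo_eq_nhdsGT hM] at h₁
  rw [nhdsWithin_Ioo_eq_nhdsLT hM] at h₁'
  refine kappa1_antitone_in_weight_closed_general M ν hM hν.1.ne' G₁ G₂ hs₁.continuousOn
    hs₂.continuousOn hp₁ hle ?_ ?_
  · exact not_integrableAtFilter_inv_of_tendsto_div one_ne_zero
      (Measurable.stronglyMeasurable (by fun_prop)).stronglyMeasurableAtFilter
      (by simpa using not_integrableAtFilter_mul_sub_inv_nhdsGT (k := 4 * π) (by positivity) 0) h₁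
  · exact not_integrableAtFilter_inv_of_tendsto_div one_ne_zero
      (Measurable.stronglyMeasurable (by fun_prop)).stronglyMeasurableAtFilter
      (not_integrableAtFilter_mul_sub_inv_nhdsLT (by positivity) M) h₁'
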